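/- Let Λ be a unital associative k-algebra, and let A and B be k-subalgebras of Λ via injective k-algebra morphisms ι_A : A → Λ and ι_B : B → Λ such that the linear map ∇_Λ∘(ι_A⊗ι_B) : A⊗B → Λ is an isomorphism of k-vector spaces. Suppose A and B carry Frobenius algebra structures and the map τ = (∇_Λ∘(ι_A⊗ι_B))^{-1}∘∇_Λ∘(ι_B⊗ι_A) : B⊗A → A⊗B satisfies the comultiplication-compatibility condition (Δ_A⊗Δ_B)∘τ = (1_A⊗τ⊗1_B)∘(τ⊗τ)∘(1_B⊗τ⊗1_A)∘(Δ_B⊗Δ_A). Then Λ is self-injective, i.e. Λ is injective as a module over itself. -/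

import Mathlib

open scoped TensorProduct

namespace TTP

section Defs

variable (k : Type*) [Field k]

section MidMap

variable {X P Q Y R S : Type*}
  [AddCommGroup X] [Module k X] [AddCommGroup P] [Module k P]
  [AddCommGroup Q] [Module k Q] [AddCommGroup Y] [Module k Y]
  [AddCommGroup R] [Module k R] [AddCommGroup S] [Module k S]

/-- The map `1_X ⊗ f ⊗ 1_Y` (with the canonical reassociations). -/
noncomputable def midMap (f : P ⊗[k] Q →ₗ[k] R ⊗[k] S) :
    (X ⊗[k] P) ⊗[k] (Q ⊗[k] Y) →ₗ[k] (X ⊗[k] R) ⊗[k] (S ⊗[k] Y) :=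
  (TensorProduct.assoc k (X ⊗[k] R) S Y).toLinearMap
    ∘ₗ TensorProduct.map (TensorProduct.assoc k X R S).symm.toLinearMap LinearMap.id
    ∘ₗ TensorProduct.map (TensorProduct.map LinearMap.id f) LinearMap.id
    ∘ₗ TensorProduct.map (TensorProduct.assoc k X P Q).toLinearMap LinearMap.id
    ∘ₗ (TensorProduct.assoc k (X ⊗[k] P) Q Y).symm.toLinearMap

end MidMap

variable {A B : Type*} [AddCommGroup A] [Module k A] [AddCommGroup B] [Module k B]

/-- `(A, mul, unit)` is a unital associative `k`-algebra (diagrammatically). -/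
def IsUnitalAssoc (mul : A ⊗[k] A →ₗ[k] A) (unit : k →ₗ[k] A) : Prop :=
  mul ∘ₗ TensorProduct.map unit LinearMap.id ∘ₗ (TensorProduct.lid k A).symm.toLinearMap
      = LinearMap.id
  ∧ mul ∘ₗ TensorProduct.map LinearMap.id unit ∘ₗ (TensorProduct.rid k A).symm.toLinearMap
      = LinearMap.id
  ∧ mul ∘ₗ TensorProduct.map mul LinearMap.id
      = mul ∘ₗ TensorProduct.map LinearMap.id mul ∘ₗ (TensorProduct.assoc k A A A).toLinearMap

/-- `(A, comul, counit)` is a counital coassociative `k`-coalgebra (diagrammatically). -/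
def IsCounitalCoassoc (comul : A →ₗ[k] A ⊗[k] A) (counit : A →ₗ[k] k) : Prop :=
  (TensorProduct.lid k A).toLinearMap ∘ₗ TensorProduct.map counit LinearMap.id ∘ₗ comul
      = LinearMap.id
  ∧ (TensorProduct.rid k A).toLinearMap ∘ₗ TensorProduct.map LinearMap.id counit ∘ₗ comul
      = LinearMap.id
  ∧ TensorProduct.map comul LinearMap.id ∘ₗ comul
      = (TensorProduct.assoc k A A A).symm.toLinearMap
          ∘ₗ TensorProduct.map LinearMap.id comul ∘ₗ comul

/-- `τ : B ⊗ A → A ⊗ B` is a twisting map for the algebras `A` and `B`: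
it is compatible with both units and with both multiplications. -/
def IsTwisting (mulA : A ⊗[k] A →ₗ[k] A) (unitA : k →ₗ[k] A)
    (mulB : B ⊗[k] B →ₗ[k] B) (unitB : k →ₗ[k] B)
    (τ : B ⊗[k] A →ₗ[k] A ⊗[k] B) : Prop :=
  τ ∘ₗ TensorProduct.map LinearMap.id unitA
      = TensorProduct.map unitA LinearMap.id ∘ₗ (TensorProduct.comm k B k).toLinearMap
  ∧ τ ∘ₗ TensorProduct.map unitB LinearMap.id
      = TensorProduct.map LinearMap.id unitB ∘ₗ (TensorProduct.comm k k A).toLinearMap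
  ∧ τ ∘ₗ TensorProduct.map mulB mulA
      = TensorProduct.map mulA mulB ∘ₗ midMap k τ ∘ₗ TensorProduct.map τ τ ∘ₗ midMap k τ

/-- The multiplication `(∇_A ⊗ ∇_B) ∘ (1 ⊗ τ ⊗ 1)` of the twisted tensor product. -/
noncomputable def tMul (mulA : A ⊗[k] A →ₗ[k] A) (mulB : B ⊗[k] B →ₗ[k] B)
    (τ : B ⊗[k] A →ₗ[k] A ⊗[k] B) :
    (A ⊗[k] B) ⊗[k] (A ⊗[k] B) →ₗ[k] A ⊗[k] B :=
  TensorProduct.map mulA mulB ∘ₗ midMap k τ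

/-- The unit `(η_A ⊗ η_B) ∘ (k ≅ k ⊗ k)` of the twisted tensor product. -/
noncomputable def tUnit (unitA : k →ₗ[k] A) (unitB : k →ₗ[k] B) : k →ₗ[k] A ⊗[k] B :=
  TensorProduct.map unitA unitB ∘ₗ (TensorProduct.lid k k).symm.toLinearMap

/-- The comultiplication `(1 ⊗ τ⁻¹ ⊗ 1) ∘ (Δ_A ⊗ Δ_B)` of the twisted tensor product. -/
noncomputable def tComul (comulA : A →ₗ[k] A ⊗[k] A) (comulB : B →ₗ[k] B ⊗[k] B)
    (τinv : A ⊗[k] B →ₗ[k] B ⊗[k] A) :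
    A ⊗[k] B →ₗ[k] (A ⊗[k] B) ⊗[k] (A ⊗[k] B) :=
  midMap k τinv ∘ₗ TensorProduct.map comulA comulB

/-- The counit `(k ⊗ k ≅ k) ∘ (ε_A ⊗ ε_B)` of the twisted tensor product. -/
noncomputable def tCounit (counitA : A →ₗ[k] k) (counitB : B →ₗ[k] k) :
    A ⊗[k] B →ₗ[k] k :=
  (TensorProduct.lid k k).toLinearMap ∘ₗ TensorProduct.map counitA counitB

/-- Compatibility of `τ` with the counits (diagram (5) of the paper). -/
def CounitCompat (counitA : A →ₗ[k] k) (counitB : B →ₗ[k] k)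
    (τ : B ⊗[k] A →ₗ[k] A ⊗[k] B) : Prop :=
  TensorProduct.map counitA LinearMap.id ∘ₗ τ
      = (TensorProduct.comm k B k).toLinearMap ∘ₗ TensorProduct.map LinearMap.id counitA
  ∧ TensorProduct.map LinearMap.id counitB ∘ₗ τ
      = (TensorProduct.comm k k A).toLinearMap ∘ₗ TensorProduct.map counitB LinearMap.id

/-- Compatibility of `τ` with the comultiplications (diagram (6) of the paper):
`(Δ_A ⊗ Δ_B)∘τ = (1⊗τ⊗1)∘(τ⊗τ)∘(1⊗τ⊗1)∘(Δ_B ⊗ Δ_A)`. -/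
def ComulCompat (comulA : A →ₗ[k] A ⊗[k] A) (comulB : B →ₗ[k] B ⊗[k] B)
    (τ : B ⊗[k] A →ₗ[k] A ⊗[k] B) : Prop :=
  TensorProduct.map comulA comulB ∘ₗ τ
      = midMap k τ ∘ₗ TensorProduct.map τ τ ∘ₗ midMap k τ ∘ₗ TensorProduct.map comulB comulA

/-- `(f ⊗ 1_B) ∘ τ = (1_A ⊗ τ) ∘ (τ ⊗ 1_A) ∘ (1_B ⊗ f)` for `f : A → A ⊗ A`. -/
def MidACompat (f : A →ₗ[k] A ⊗[k] A) (τ : B ⊗[k] A →ₗ[k] A ⊗[k] B) : Prop :=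
  TensorProduct.map f LinearMap.id ∘ₗ τ
    = (TensorProduct.assoc k A A B).symm.toLinearMap
      ∘ₗ TensorProduct.map LinearMap.id τ
      ∘ₗ (TensorProduct.assoc k A B A).toLinearMap
      ∘ₗ TensorProduct.map τ LinearMap.id
      ∘ₗ (TensorProduct.assoc k B A A).symm.toLinearMap
      ∘ₗ TensorProduct.map LinearMap.id f

/-- `(1_A ⊗ g) ∘ τ = (τ ⊗ 1_B) ∘ (1_B ⊗ τ) ∘ (g ⊗ 1_A)` for `g : B → B ⊗ B`. -/
def MidBCompat (g : B →ₗ[k] B ⊗[k] B) (τ : B ⊗[k] A →ₗ[k] A ⊗[k] B) : Prop :=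
  TensorProduct.map LinearMap.id g ∘ₗ τ
    = (TensorProduct.assoc k A B B).toLinearMap
      ∘ₗ TensorProduct.map τ LinearMap.id
      ∘ₗ (TensorProduct.assoc k B A B).symm.toLinearMap
      ∘ₗ TensorProduct.map LinearMap.id τ
      ∘ₗ (TensorProduct.assoc k B B A).toLinearMap
      ∘ₗ TensorProduct.map g LinearMap.id

/-- `(A, mul, unit, comul, counit)` is a Frobenius algebra (diagrammatically). -/
def IsFrobenius (mul : A ⊗[k] A →ₗ[k] A) (unit : k →ₗ[k] A)
    (comul : A →ₗ[k] A ⊗[k] A) (counit : A →ₗ[k] k) : Prop :=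
  IsUnitalAssoc k mul unit
  ∧ IsCounitalCoassoc k comul counit
  ∧ comul ∘ₗ mul
      = TensorProduct.map LinearMap.id mul ∘ₗ (TensorProduct.assoc k A A A).toLinearMap
          ∘ₗ TensorProduct.map comul LinearMap.id
  ∧ comul ∘ₗ mul
      = TensorProduct.map mul LinearMap.id ∘ₗ (TensorProduct.assoc k A A A).symm.toLinearMap
          ∘ₗ TensorProduct.map LinearMap.id comul

/-- `(A, mul, unit, comul, counit)` is a bialgebra (diagrammatically). -/
def IsBialgebra (mul : A ⊗[k] A →ₗ[k] A) (unit : k →ₗ[k] A)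
    (comul : A →ₗ[k] A ⊗[k] A) (counit : A →ₗ[k] k) : Prop :=
  IsUnitalAssoc k mul unit
  ∧ IsCounitalCoassoc k comul counit
  ∧ counit ∘ₗ mul = (TensorProduct.lid k k).toLinearMap ∘ₗ TensorProduct.map counit counit
  ∧ comul ∘ₗ unit = TensorProduct.map unit unit ∘ₗ (TensorProduct.lid k k).symm.toLinearMap
  ∧ counit ∘ₗ unit = LinearMap.id
  ∧ comul ∘ₗ mul
      = TensorProduct.map mul mul ∘ₗ midMap k (TensorProduct.comm k A A).toLinearMap
          ∘ₗ TensorProduct.map comul comul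

/-- `(A, mul, unit, comul, counit)` is a Hopf algebra: a bialgebra with an antipode. -/
def IsHopf (mul : A ⊗[k] A →ₗ[k] A) (unit : k →ₗ[k] A)
    (comul : A →ₗ[k] A ⊗[k] A) (counit : A →ₗ[k] k) : Prop :=
  IsBialgebra k mul unit comul counit
  ∧ ∃ S : A →ₗ[k] A,
      mul ∘ₗ TensorProduct.map S LinearMap.id ∘ₗ comul = unit ∘ₗ counit
      ∧ mul ∘ₗ TensorProduct.map LinearMap.id S ∘ₗ comul = unit ∘ₗ counit

/-- `Γ` is a right inverse of the multiplication which is a bimodule morphism,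
witnessing separability of the algebra. -/
def IsSeparableWith (mul : A ⊗[k] A →ₗ[k] A) (Γ : A →ₗ[k] A ⊗[k] A) : Prop :=
  mul ∘ₗ Γ = LinearMap.id
  ∧ Γ ∘ₗ mul ∘ₗ TensorProduct.map LinearMap.id mul
      = TensorProduct.map mul mul
          ∘ₗ (TensorProduct.assoc k A A (A ⊗[k] A)).symm.toLinearMap
          ∘ₗ TensorProduct.map LinearMap.id (TensorProduct.assoc k A A A).toLinearMap
          ∘ₗ TensorProduct.map LinearMap.id (TensorProduct.map Γ LinearMap.id)

/-- The pairing `β` is associative: `β∘(1⊗∇) = β∘(∇⊗1)`. -/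
def PairingAssoc (mul : A ⊗[k] A →ₗ[k] A) (β : A ⊗[k] A →ₗ[k] k) : Prop :=
  β ∘ₗ TensorProduct.map LinearMap.id mul ∘ₗ (TensorProduct.assoc k A A A).toLinearMap
    = β ∘ₗ TensorProduct.map mul LinearMap.id

/-- The pairing `β` is non-degenerate with co-pairing `α`:
`(1⊗β)∘(α⊗1) = 1_A` under the canonical isomorphisms. -/
def PairingNondeg (β : A ⊗[k] A →ₗ[k] k) (α : k →ₗ[k] A ⊗[k] A) : Prop :=
  (TensorProduct.rid k A).toLinearMap
      ∘ₗ TensorProduct.map LinearMap.id β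
      ∘ₗ (TensorProduct.assoc k A A A).toLinearMap
      ∘ₗ TensorProduct.map α LinearMap.id
      ∘ₗ (TensorProduct.lid k A).symm.toLinearMap = LinearMap.id

/-- The pairing `β` is symmetric: `β ∘ σ = β` for the flip `σ`. -/
def PairingSymm (β : A ⊗[k] A →ₗ[k] k) : Prop :=
  β ∘ₗ (TensorProduct.comm k A A).toLinearMap = β

end Defs

end TTP

/-!
If `e = ∑ r ⊗ s` is a Casimir element of `Λ` (`x e = e x` for all `x`) and a functional `μ`
satisfies `∑ μ(s) r = 1`, then `Λ` is self-injective: for `g : I → Λ`, extend `μ ∘ g` to a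
functional `h` on `Λ`; multiplication by `∑ h(s) r` on the right extends `g`.

Contracting the outer legs in the compatibility condition evaluated at `1 ⊗ 1` shows that `τ` is
surjective; as Frobenius algebras are finite-dimensional, `τ` is bijective. So `Λ` is both `A ⊗ B`
with comultiplication `(1 ⊗ τ⁻¹ ⊗ 1) ∘ (Δ_A ⊗ Δ_B)` and `B ⊗ A` with comultiplication
`(1 ⊗ τ ⊗ 1) ∘ (Δ_B ⊗ Δ_A)`, and the compatibility condition says that the two agree in `Λ ⊗ Λ`.
Let `e` be their common value at `1`. The Frobenius relations give `Δ(a b) = a e b` in the first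
description and `Δ(b a) = b e a` in the second, so `a e = e a` and `b e = e b`; as `A` and `B`
generate `Λ`, `e` is a Casimir element. The required functional is `ε_B ⊗ ε_A`.
-/

namespace TTP

section Slices

variable {k : Type*} [Field k] {M M' N N' : Type*} [AddCommGroup M] [Module k M]
  [AddCommGroup M'] [Module k M'] [AddCommGroup N] [Module k N] [AddCommGroup N'] [Module k N']

/-- The slice map `f ⊗ 1 : M ⊗ N → k ⊗ N ≅ N` of a functional `f` on the left leg. -/
noncomputable def leftSlice (f : M →ₗ[k] k) : M ⊗[k] N →ₗ[k] N :=
  (TensorProduct.lid k N).toLinearMap ∘ₗ TensorProduct.map f LinearMap.id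

/-- The slice map `1 ⊗ f : M ⊗ N → M ⊗ k ≅ M` of a functional `f` on the right leg. -/
noncomputable def rightSlice (f : N →ₗ[k] k) : M ⊗[k] N →ₗ[k] M :=
  (TensorProduct.rid k M).toLinearMap ∘ₗ TensorProduct.map LinearMap.id f

@[simp]
lemma leftSlice_tmul (f : M →ₗ[k] k) (m : M) (n : N) : leftSlice f (m ⊗ₜ[k] n) = f m • n := rfl

@[simp]
lemma rightSlice_tmul (f : N →ₗ[k] k) (m : M) (n : N) : rightSlice f (m ⊗ₜ[k] n) = f n • m := rfl

@[simp]
lemma leftSlice_comp_mk (f : M →ₗ[k] k) (m : M) :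
    leftSlice f ∘ₗ TensorProduct.mk k M N m = f m • LinearMap.id := rfl

@[simp]
lemma rightSlice_comp_mk_flip (f : N →ₗ[k] k) (n : N) :
    rightSlice f ∘ₗ (TensorProduct.mk k M N).flip n = f n • LinearMap.id := rfl

lemma leftSlice_map (f : M' →ₗ[k] k) (g : M →ₗ[k] M') (h : N →ₗ[k] N') (z : M ⊗[k] N) :
    leftSlice f (TensorProduct.map g h z) = h (leftSlice (f ∘ₗ g) z) := by
  suffices leftSlice f ∘ₗ TensorProduct.map g h = h ∘ₗ leftSlice (f ∘ₗ g) from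
    LinearMap.congr_fun this z
  ext; simp

lemma rightSlice_map (f : N' →ₗ[k] k) (g : M →ₗ[k] M') (h : N →ₗ[k] N') (z : M ⊗[k] N) :
    rightSlice f (TensorProduct.map g h z) = g (rightSlice (f ∘ₗ h) z) := by
  suffices rightSlice f ∘ₗ TensorProduct.map g h = g ∘ₗ rightSlice (f ∘ₗ h) from
    LinearMap.congr_fun this z
  ext; simp

lemma finite_of_forall_exists_leftSlice_eq (z : M ⊗[k] N)
    (hz : ∀ n, ∃ f : M →ₗ[k] k, leftSlice f z = n) : Module.Finite k N := by
  obtain ⟨d, r, s, rfl⟩ := TensorProduct.exists_sum_tmul_eq z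
  refine .of_surjective (Fintype.linearCombination k s) fun n => ?_
  obtain ⟨f, rfl⟩ := hz n
  exact ⟨fun i => f (r i), by simp [Fintype.linearCombination_apply]⟩

end Slices

section MidMap

variable {k : Type*} [Field k] {X X' Y Y' P Q R S T U : Type*}
  [AddCommGroup X] [Module k X] [AddCommGroup X'] [Module k X']
  [AddCommGroup Y] [Module k Y] [AddCommGroup Y'] [Module k Y']
  [AddCommGroup P] [Module k P] [AddCommGroup Q] [Module k Q]
  [AddCommGroup R] [Module k R] [AddCommGroup S] [Module k S]
  [AddCommGroup T] [Module k T] [AddCommGroup U] [Module k U]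

lemma midMap_tmul (φ : P ⊗[k] Q →ₗ[k] R ⊗[k] S) (x : X) (p : P) (q : Q) (y : Y) :
    midMap k φ ((x ⊗ₜ p) ⊗ₜ (q ⊗ₜ y))
      = TensorProduct.map (TensorProduct.mk k X R x) ((TensorProduct.mk k S Y).flip y)
          (φ (p ⊗ₜ q)) := by
  suffices ∀ z : R ⊗[k] S, TensorProduct.assoc k (X ⊗[k] R) S Y
      ((TensorProduct.assoc k X R S).symm (x ⊗ₜ z) ⊗ₜ y)
        = TensorProduct.map (TensorProduct.mk k X R x) ((TensorProduct.mk k S Y).flip y) z from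
    this _
  intro z
  induction z using TensorProduct.induction_on with
  | zero => simp
  | tmul r s => simp
  | add u v hu hv => simp only [TensorProduct.tmul_add, TensorProduct.add_tmul, map_add, hu, hv]

lemma midMap_comp (ψ : R ⊗[k] S →ₗ[k] T ⊗[k] U) (φ : P ⊗[k] Q →ₗ[k] R ⊗[k] S) :
    (midMap k (ψ ∘ₗ φ) : (X ⊗[k] P) ⊗[k] (Q ⊗[k] Y) →ₗ[k] _) = midMap k ψ ∘ₗ midMap k φ := by
  ext x p q y
  simp [midMap]

lemma midMap_id :
    midMap k LinearMap.id = (LinearMap.id : (X ⊗[k] P) ⊗[k] (Q ⊗[k] Y) →ₗ[k] _) := by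
  ext x p q y
  simp [midMap_tmul]

lemma midMap_map (φ : P ⊗[k] Q →ₗ[k] R ⊗[k] S) (f : X →ₗ[k] X') (g : Y →ₗ[k] Y')
    (w : (X ⊗[k] P) ⊗[k] (Q ⊗[k] Y)) :
    midMap k φ (TensorProduct.map (TensorProduct.map f LinearMap.id)
        (TensorProduct.map LinearMap.id g) w)
      = TensorProduct.map (TensorProduct.map f LinearMap.id) (TensorProduct.map LinearMap.id g)
          (midMap k φ w) := by
  suffices midMap k φ ∘ₗ TensorProduct.map (TensorProduct.map f LinearMap.id)
      (TensorProduct.map LinearMap.id g)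
        = TensorProduct.map (TensorProduct.map f LinearMap.id) (TensorProduct.map LinearMap.id g)
          ∘ₗ midMap k φ from LinearMap.congr_fun this w
  ext x p q y
  simp only [TensorProduct.AlgebraTensorModule.curry_apply, TensorProduct.curry_apply,
    LinearMap.restrictScalars_self, LinearMap.coe_comp, Function.comp_apply,
    TensorProduct.map_tmul, LinearMap.id_apply, midMap_tmul, TensorProduct.map_map]
  rfl

lemma slice_midMap (φ : P ⊗[k] Q →ₗ[k] R ⊗[k] S) (f : X →ₗ[k] k) (g : Y →ₗ[k] k)
    (w : (X ⊗[k] P) ⊗[k] (Q ⊗[k] Y)) :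
    TensorProduct.map (leftSlice f) (rightSlice g) (midMap k φ w)
      = φ (TensorProduct.map (leftSlice f) (rightSlice g) w) := by
  suffices TensorProduct.map (leftSlice f) (rightSlice g) ∘ₗ midMap k φ
      = φ ∘ₗ TensorProduct.map (leftSlice f) (rightSlice g) from LinearMap.congr_fun this w
  ext x p q y
  simp [midMap_tmul, TensorProduct.map_map, TensorProduct.map_smul_left,
    TensorProduct.map_smul_right, ← TensorProduct.smul_tmul', TensorProduct.tmul_smul]

lemma rightSlice_tCounit_midMap (φ : P ⊗[k] Q →ₗ[k] R ⊗[k] S) (f : S →ₗ[k] k) (g : Y →ₗ[k] k)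
    (w : (X ⊗[k] P) ⊗[k] (Q ⊗[k] Y)) :
    rightSlice (tCounit k f g) (midMap k φ w)
      = TensorProduct.map LinearMap.id (rightSlice f ∘ₗ φ)
          (TensorProduct.assoc k X P Q (TensorProduct.map LinearMap.id (rightSlice g) w)) := by
  suffices rightSlice (tCounit k f g) ∘ₗ midMap k φ
      = TensorProduct.map LinearMap.id (rightSlice f ∘ₗ φ)
          ∘ₗ (TensorProduct.assoc k X P Q).toLinearMap
          ∘ₗ TensorProduct.map LinearMap.id (rightSlice g) from LinearMap.congr_fun this w
  ext x p q y
  have tCounit_comp : tCounit k f g ∘ₗ (TensorProduct.mk k S Y).flip y = g y • f := by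
    ext; simp [tCounit, mul_comm]
  have rightSlice_smul (z : R ⊗[k] S) : rightSlice (g y • f) z = g y • rightSlice f z := by
    simp [rightSlice, TensorProduct.map_smul_right]
  simp [midMap_tmul, rightSlice_map, tCounit_comp, rightSlice_smul]

end MidMap

section Casimir

variable {k Λ : Type*} [Field k] [Ring Λ] [Algebra k Λ]

/-- A Casimir element of `Λ`: an element `∑ r ⊗ s` of `Λ ⊗ Λ` with
`∑ x r ⊗ s = ∑ r ⊗ s x` for all `x`. -/
def IsCasimir (e : Λ ⊗[k] Λ) : Prop :=
  ∀ x : Λ, (x ⊗ₜ[k] 1) * e = e * (1 ⊗ₜ[k] x)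

lemma rightSlice_tmul_one_mul (f : Λ →ₗ[k] k) (x : Λ) (z : Λ ⊗[k] Λ) :
    rightSlice f ((x ⊗ₜ[k] 1) * z) = x * rightSlice f z := by
  induction z using TensorProduct.induction_on with
  | zero => simp
  | tmul r s => simp
  | add u v hu hv => simp only [mul_add, map_add, hu, hv]

lemma rightSlice_mul_one_tmul (f : Λ →ₗ[k] k) (z : Λ ⊗[k] Λ) (x : Λ) :
    rightSlice f (z * (1 ⊗ₜ[k] x)) = rightSlice (f ∘ₗ LinearMap.mulRight k x) z := by
  induction z using TensorProduct.induction_on with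
  | zero => simp
  | tmul r s => simp
  | add u v hu hv => simp only [add_mul, map_add, hu, hv]

theorem IsCasimir.injective {e : Λ ⊗[k] Λ} (he : IsCasimir e) {μ : Λ →ₗ[k] k}
    (hμ : rightSlice μ e = 1) : Module.Injective Λ Λ := by
  refine Module.Baer.injective fun I g => ?_
  obtain ⟨h, hh⟩ := LinearMap.exists_extend (p := I.restrictScalars k)
    (μ ∘ₗ g.restrictScalars k)
  have h_apply (y : I) : h y = μ (g y) := LinearMap.congr_fun hh y
  refine ⟨LinearMap.toSpanSingleton Λ Λ (rightSlice h e), fun x hx => ?_⟩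
  have h_mulRight : h ∘ₗ LinearMap.mulRight k x = μ ∘ₗ LinearMap.mulRight k (g ⟨x, hx⟩) := by
    ext s
    exact (h_apply (s • ⟨x, hx⟩)).trans (congrArg μ (g.map_smul s ⟨x, hx⟩))
  calc x * rightSlice h e
      = rightSlice (h ∘ₗ LinearMap.mulRight k x) e := by
        rw [← rightSlice_tmul_one_mul, he, rightSlice_mul_one_tmul]
    _ = g ⟨x, hx⟩ * rightSlice μ e := by
        rw [h_mulRight, ← rightSlice_mul_one_tmul, ← he, rightSlice_tmul_one_mul]
    _ = g ⟨x, hx⟩ := by rw [hμ, mul_one]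

end Casimir

namespace IsCounitalCoassoc

variable {k A : Type*} [Field k] [AddCommGroup A] [Module k A] {comul : A →ₗ[k] A ⊗[k] A}
  {counit : A →ₗ[k] k}

lemma leftSlice_counit (h : IsCounitalCoassoc k comul counit) (a : A) :
    leftSlice counit (comul a) = a :=
  LinearMap.congr_fun h.1 a

lemma rightSlice_counit (h : IsCounitalCoassoc k comul counit) (a : A) :
    rightSlice counit (comul a) = a :=
  LinearMap.congr_fun h.2.1 a

end IsCounitalCoassoc

namespace IsFrobenius

variable {k A : Type*} [Field k] [AddCommGroup A] [Module k A] {mul : A ⊗[k] A →ₗ[k] A}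
  {unit : k →ₗ[k] A} {comul : A →ₗ[k] A ⊗[k] A} {counit : A →ₗ[k] k}

lemma comul_eq_map_mul_left (h : IsFrobenius k mul unit comul counit) (a : A) :
    comul a = TensorProduct.map (TensorProduct.curry mul a) LinearMap.id (comul (unit 1)) := by
  have mul_one : mul (a ⊗ₜ unit 1) = a := by simpa using LinearMap.congr_fun h.1.2.1 a
  have comul_mul := LinearMap.congr_fun h.2.2.2 (a ⊗ₜ unit 1)
  simp only [LinearMap.comp_apply, mul_one, TensorProduct.map_tmul, LinearEquiv.coe_coe,
    LinearMap.id_apply] at comul_mul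
  rw [comul_mul]
  induction comul (unit 1) using TensorProduct.induction_on with
  | zero => simp
  | tmul r s => simp
  | add u v hu hv => simp only [TensorProduct.tmul_add, map_add, hu, hv]

lemma comul_eq_map_mul_right (h : IsFrobenius k mul unit comul counit) (a : A) :
    comul a
      = TensorProduct.map LinearMap.id ((TensorProduct.curry mul).flip a) (comul (unit 1)) := by
  have one_mul : mul (unit 1 ⊗ₜ a) = a := by simpa using LinearMap.congr_fun h.1.1 a
  have comul_mul := LinearMap.congr_fun h.2.2.1 (unit 1 ⊗ₜ a)
  simp only [LinearMap.comp_apply, one_mul, TensorProduct.map_tmul, LinearEquiv.coe_coe,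
    LinearMap.id_apply] at comul_mul
  rw [comul_mul]
  induction comul (unit 1) using TensorProduct.induction_on with
  | zero => simp
  | tmul r s => simp
  | add u v hu hv => simp only [TensorProduct.add_tmul, map_add, hu, hv]

lemma leftSlice_counit_mul (h : IsFrobenius k mul unit comul counit) (a : A) :
    leftSlice (counit ∘ₗ TensorProduct.curry mul a) (comul (unit 1)) = a := by
  simpa [h.comul_eq_map_mul_left a, leftSlice_map] using h.2.1.leftSlice_counit a

lemma rightSlice_counit_mul (h : IsFrobenius k mul unit comul counit) (a : A) :
    rightSlice (counit ∘ₗ (TensorProduct.curry mul).flip a) (comul (unit 1)) = a := by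
  simpa [h.comul_eq_map_mul_right a, rightSlice_map] using h.2.1.rightSlice_counit a

theorem finite (h : IsFrobenius k mul unit comul counit) : Module.Finite k A :=
  finite_of_forall_exists_leftSlice_eq (comul (unit 1)) fun a => ⟨_, h.leftSlice_counit_mul a⟩

end IsFrobenius

section Factorization

variable {k Λ A B : Type*} [Field k] [Ring Λ] [Algebra k Λ]
  [AddCommGroup A] [Module k A] [AddCommGroup B] [Module k B]

/-- `ι` is a morphism of unital `k`-algebras from `(A, mul, unit)` to `Λ`. -/
structure IsAlgHom (mul : A ⊗[k] A →ₗ[k] A) (unit : k →ₗ[k] A) (ι : A →ₗ[k] Λ) : Prop where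
  map_mul (a a' : A) : ι (mul (a ⊗ₜ a')) = ι a * ι a'
  map_one : ι (unit 1) = 1

/-- The map `∇_Λ ∘ (ι_A ⊗ ι_B)`, whose bijectivity says that `Λ` factors as `A ⊗ B`. -/
noncomputable def mulMap (ιA : A →ₗ[k] Λ) (ιB : B →ₗ[k] Λ) : A ⊗[k] B →ₗ[k] Λ :=
  LinearMap.mul' k Λ ∘ₗ TensorProduct.map ιA ιB

@[simp]
lemma mulMap_tmul (ιA : A →ₗ[k] Λ) (ιB : B →ₗ[k] Λ) (a : A) (b : B) :
    mulMap ιA ιB (a ⊗ₜ b) = ιA a * ιB b := by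
  simp [mulMap]

/-- The comultiplication `(1 ⊗ σ ⊗ 1) ∘ (Δ_A ⊗ Δ_B)` on `A ⊗ B`, with both legs multiplied out
in `Λ`. -/
noncomputable def mulComul (ιA : A →ₗ[k] Λ) (ιB : B →ₗ[k] Λ) (comulA : A →ₗ[k] A ⊗[k] A)
    (comulB : B →ₗ[k] B ⊗[k] B) (σ : A ⊗[k] B →ₗ[k] B ⊗[k] A) : A ⊗[k] B →ₗ[k] Λ ⊗[k] Λ :=
  TensorProduct.map (mulMap ιA ιB) (mulMap ιA ιB) ∘ₗ tComul k comulA comulB σ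

variable {mulA : A ⊗[k] A →ₗ[k] A} {unitA : k →ₗ[k] A}
  {comulA : A →ₗ[k] A ⊗[k] A} {counitA : A →ₗ[k] k}
  {mulB : B ⊗[k] B →ₗ[k] B} {unitB : k →ₗ[k] B}
  {comulB : B →ₗ[k] B ⊗[k] B} {counitB : B →ₗ[k] k}
  {ιA : A →ₗ[k] Λ} {ιB : B →ₗ[k] Λ}

lemma isCasimir_of_mulMap_surjective (hsurj : Function.Surjective (mulMap ιA ιB))
    {e : Λ ⊗[k] Λ} (heA : ∀ a, (ιA a ⊗ₜ[k] 1) * e = e * (1 ⊗ₜ[k] ιA a))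
    (heB : ∀ b, (ιB b ⊗ₜ[k] 1) * e = e * (1 ⊗ₜ[k] ιB b)) : IsCasimir e := by
  intro x
  obtain ⟨z, rfl⟩ := hsurj x
  induction z using TensorProduct.induction_on with
  | zero => simp
  | tmul a b =>
    calc (mulMap ιA ιB (a ⊗ₜ b) ⊗ₜ[k] 1) * e
        = (ιA a ⊗ₜ[k] 1) * ((ιB b ⊗ₜ[k] 1) * e) := by simp [← mul_assoc]
      _ = e * (1 ⊗ₜ[k] ιA a) * (1 ⊗ₜ[k] ιB b) := by rw [heB, ← mul_assoc, heA]
      _ = e * (1 ⊗ₜ[k] mulMap ιA ιB (a ⊗ₜ b)) := by simp [mul_assoc]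
  | add u v hu hv =>
    rw [map_add, TensorProduct.add_tmul, TensorProduct.tmul_add, add_mul, mul_add, hu, hv]

lemma map_mulMap_map_mul (hιA : IsAlgHom mulA unitA ιA) (hιB : IsAlgHom mulB unitB ιB)
    (a : A) (b : B) (w : (A ⊗[k] B) ⊗[k] (A ⊗[k] B)) :
    TensorProduct.map (mulMap ιA ιB) (mulMap ιA ιB)
        (TensorProduct.map (TensorProduct.map (TensorProduct.curry mulA a) LinearMap.id)
          (TensorProduct.map LinearMap.id ((TensorProduct.curry mulB).flip b)) w)
      = (ιA a ⊗ₜ[k] 1) * TensorProduct.map (mulMap ιA ιB) (mulMap ιA ιB) w * (1 ⊗ₜ[k] ιB b) := by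
  have mul_left (z : A ⊗[k] B) :
      mulMap ιA ιB (TensorProduct.map (TensorProduct.curry mulA a) LinearMap.id z)
        = ιA a * mulMap ιA ιB z := by
    induction z using TensorProduct.induction_on with
    | zero => simp
    | tmul p q => simp [hιA.map_mul, mul_assoc]
    | add u v hu hv => simp only [map_add, mul_add, hu, hv]
  have mul_right (z : A ⊗[k] B) :
      mulMap ιA ιB (TensorProduct.map LinearMap.id ((TensorProduct.curry mulB).flip b) z)
        = mulMap ιA ιB z * ιB b := by
    induction z using TensorProduct.induction_on with
    | zero => simp
    | tmul p q => simp [hιB.map_mul, mul_assoc]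
    | add u v hu hv => simp only [map_add, add_mul, hu, hv]
  induction w using TensorProduct.induction_on with
  | zero => simp
  | tmul u v => simp [mul_left, mul_right]
  | add u v hu hv => simp only [map_add, mul_add, add_mul, hu, hv]

lemma mulComul_tmul (hA : IsFrobenius k mulA unitA comulA counitA)
    (hB : IsFrobenius k mulB unitB comulB counitB)
    (hιA : IsAlgHom mulA unitA ιA) (hιB : IsAlgHom mulB unitB ιB)
    (σ : A ⊗[k] B →ₗ[k] B ⊗[k] A) (a : A) (b : B) :
    mulComul ιA ιB comulA comulB σ (a ⊗ₜ b)
      = (ιA a ⊗ₜ[k] 1) * mulComul ιA ιB comulA comulB σ (unitA 1 ⊗ₜ unitB 1)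
          * (1 ⊗ₜ[k] ιB b) := by
  simp only [mulComul, tComul, LinearMap.comp_apply, TensorProduct.map_tmul]
  rw [← map_mulMap_map_mul hιA hιB, ← midMap_map, TensorProduct.map_tmul,
    ← hA.comul_eq_map_mul_left, ← hB.comul_eq_map_mul_right]

lemma rightSlice_tCounit_tComul (hA : IsCounitalCoassoc k comulA counitA)
    (hB : IsCounitalCoassoc k comulB counitB) {σ : A ⊗[k] B →ₗ[k] B ⊗[k] A} {b : B}
    (hσ : ∀ a, σ (a ⊗ₜ b) = b ⊗ₜ a) (a : A) :
    rightSlice (tCounit k counitA counitB) (tComul k comulA comulB σ (a ⊗ₜ b)) = a ⊗ₜ b := by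
  have slice_left (s : A ⊗[k] A) :
      TensorProduct.map LinearMap.id (rightSlice counitA ∘ₗ σ)
          (TensorProduct.assoc k A A B (s ⊗ₜ b)) = rightSlice counitA s ⊗ₜ b := by
    induction s using TensorProduct.induction_on with
    | zero => simp
    | tmul p q => simp [hσ, TensorProduct.tmul_smul, TensorProduct.smul_tmul']
    | add u v hu hv => simp only [TensorProduct.add_tmul, map_add, hu, hv]
  rw [tComul, LinearMap.comp_apply, TensorProduct.map_tmul, rightSlice_tCounit_midMap,
    TensorProduct.map_tmul, hB.rightSlice_counit, LinearMap.id_apply, slice_left,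
    hA.rightSlice_counit]

lemma exists_rightSlice_mulComul_eq_one (hA : IsCounitalCoassoc k comulA counitA)
    (hB : IsCounitalCoassoc k comulB counitB)
    (hιA : IsAlgHom mulA unitA ιA) (hιB : IsAlgHom mulB unitB ιB)
    (hinj : Function.Injective (mulMap ιA ιB)) {σ : A ⊗[k] B →ₗ[k] B ⊗[k] A}
    (hσ : ∀ a, σ (a ⊗ₜ unitB 1) = unitB 1 ⊗ₜ a) :
    ∃ μ : Λ →ₗ[k] k,
      rightSlice μ (mulComul ιA ιB comulA comulB σ (unitA 1 ⊗ₜ unitB 1)) = 1 := by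
  obtain ⟨inv, hinv⟩ := LinearMap.exists_leftInverse_of_injective _ (LinearMap.ker_eq_bot.2 hinj)
  refine ⟨tCounit k counitA counitB ∘ₗ inv, ?_⟩
  rw [mulComul, LinearMap.comp_apply, rightSlice_map, LinearMap.comp_assoc, hinv,
    LinearMap.comp_id, rightSlice_tCounit_tComul hA hB hσ, mulMap_tmul, hιA.map_one, hιB.map_one,
    mul_one]

variable {τ : B ⊗[k] A →ₗ[k] A ⊗[k] B}

lemma twist_one_tmul (hιB : IsAlgHom mulB unitB ιB) (hinj : Function.Injective (mulMap ιA ιB))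
    (hτ : mulMap ιA ιB ∘ₗ τ = mulMap ιB ιA) (a : A) : τ (unitB 1 ⊗ₜ a) = a ⊗ₜ unitB 1 :=
  hinj <| (LinearMap.congr_fun hτ _).trans <| by simp [hιB.map_one]

lemma twist_tmul_one (hιA : IsAlgHom mulA unitA ιA) (hinj : Function.Injective (mulMap ιA ιB))
    (hτ : mulMap ιA ιB ∘ₗ τ = mulMap ιB ιA) (b : B) : τ (b ⊗ₜ unitA 1) = unitA 1 ⊗ₜ b :=
  hinj <| (LinearMap.congr_fun hτ _).trans <| by simp [hιA.map_one]

namespace ComulCompat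

lemma surjective (hcompat : ComulCompat k comulA comulB τ)
    (hA : IsFrobenius k mulA unitA comulA counitA) (hB : IsFrobenius k mulB unitB comulB counitB)
    (hτ_one : τ (unitB 1 ⊗ₜ unitA 1) = unitA 1 ⊗ₜ unitB 1) : Function.Surjective τ := by
  rw [← LinearMap.range_eq_top, eq_top_iff, ← TensorProduct.span_tmul_eq_top, Submodule.span_le]
  rintro _ ⟨a, b, rfl⟩
  have comul_one := LinearMap.congr_fun hcompat (unitB 1 ⊗ₜ unitA 1)
  simp only [LinearMap.comp_apply, hτ_one, TensorProduct.map_tmul] at comul_one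
  rw [← hA.leftSlice_counit_mul a, ← hB.rightSlice_counit_mul b, ← TensorProduct.map_tmul,
    comul_one, slice_midMap]
  exact LinearMap.mem_range_self τ _

lemma bijective (hcompat : ComulCompat k comulA comulB τ)
    (hA : IsFrobenius k mulA unitA comulA counitA) (hB : IsFrobenius k mulB unitB comulB counitB)
    (hτ_one : τ (unitB 1 ⊗ₜ unitA 1) = unitA 1 ⊗ₜ unitB 1) : Function.Bijective τ := by
  have := hA.finite
  have := hB.finite
  have hsurj := hcompat.surjective hA hB hτ_one
  exact ⟨(LinearMap.injective_iff_surjective_of_finrank_eq_finrank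
    (TensorProduct.comm k B A).finrank_eq).2 hsurj, hsurj⟩

lemma mulComul_symm_comp {τ : B ⊗[k] A ≃ₗ[k] A ⊗[k] B}
    (hcompat : ComulCompat k comulA comulB τ.toLinearMap)
    (hτ : mulMap ιA ιB ∘ₗ τ.toLinearMap = mulMap ιB ιA) :
    mulComul ιA ιB comulA comulB τ.symm.toLinearMap ∘ₗ τ.toLinearMap
      = mulComul ιB ιA comulB comulA τ.toLinearMap := by
  have midMap_symm : midMap k τ.symm.toLinearMap ∘ₗ midMap k τ.toLinearMap
      = (LinearMap.id : (A ⊗[k] B) ⊗[k] (A ⊗[k] B) →ₗ[k] _) := by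
    rw [← midMap_comp, LinearEquiv.symm_comp, midMap_id]
  simp only [mulComul, tComul, ← hτ, TensorProduct.map_comp, LinearMap.comp_assoc]
  rw [hcompat, ← LinearMap.comp_assoc _ _ (midMap k τ.symm.toLinearMap), midMap_symm,
    LinearMap.id_comp]

theorem isCasimir_mulComul {τ : B ⊗[k] A ≃ₗ[k] A ⊗[k] B}
    (hcompat : ComulCompat k comulA comulB τ.toLinearMap)
    (hA : IsFrobenius k mulA unitA comulA counitA) (hB : IsFrobenius k mulB unitB comulB counitB)
    (hιA : IsAlgHom mulA unitA ιA) (hιB : IsAlgHom mulB unitB ιB)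
    (hbij : Function.Bijective (mulMap ιA ιB))
    (hτ : mulMap ιA ιB ∘ₗ τ.toLinearMap = mulMap ιB ιA) :
    IsCasimir (mulComul ιB ιA comulB comulA τ.toLinearMap (unitB 1 ⊗ₜ unitA 1)) := by
  have mulComul_twist (z : B ⊗[k] A) : mulComul ιA ιB comulA comulB τ.symm.toLinearMap (τ z)
      = mulComul ιB ιA comulB comulA τ.toLinearMap z :=
    LinearMap.congr_fun (hcompat.mulComul_symm_comp hτ) z
  have τ_one_tmul (a : A) : τ (unitB 1 ⊗ₜ a) = a ⊗ₜ unitB 1 := twist_one_tmul hιB hbij.1 hτ a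
  have τ_tmul_one (b : B) : τ (b ⊗ₜ unitA 1) = unitA 1 ⊗ₜ b := twist_tmul_one hιA hbij.1 hτ b
  have mulComul_symm_tmul (a : A) (b : B) :
      mulComul ιA ιB comulA comulB τ.symm.toLinearMap (a ⊗ₜ b)
        = (ιA a ⊗ₜ[k] 1) * mulComul ιB ιA comulB comulA τ.toLinearMap (unitB 1 ⊗ₜ unitA 1)
          * (1 ⊗ₜ[k] ιB b) := by
    rw [mulComul_tmul hA hB hιA hιB, ← τ_one_tmul, mulComul_twist]
  refine isCasimir_of_mulMap_surjective hbij.2 (fun a => ?_) (fun b => ?_)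
  · have comul_a := mulComul_twist (unitB 1 ⊗ₜ a)
    rw [τ_one_tmul, mulComul_symm_tmul, mulComul_tmul hB hA hιB hιA _ (unitB 1) a] at comul_a
    simpa [hιB.map_one, ← Algebra.TensorProduct.one_def] using comul_a
  · have comul_b := mulComul_twist (b ⊗ₜ unitA 1)
    rw [τ_tmul_one, mulComul_symm_tmul, mulComul_tmul hB hA hιB hιA _ b (unitA 1)] at comul_b
    simpa [hιA.map_one, ← Algebra.TensorProduct.one_def] using comul_b.symm

end ComulCompat

end Factorization

end TTP

open TTP in
/-- Corollary 5.5 of the paper, criterion for self-injectivity: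
if `Λ` factors as a vector space as a product of two Frobenius subalgebras `A`
and `B`, and the induced map `τ = (∇_Λ(ι_A⊗ι_B))⁻¹ ∘ ∇_Λ ∘ (ι_B⊗ι_A)` is
compatible with the comultiplications, then `Λ` is self-injective. -/
theorem selfInjective_criterion
    {k Λ A B : Type*} [Field k] [Ring Λ] [Algebra k Λ]
    [AddCommGroup A] [Module k A] [AddCommGroup B] [Module k B]
    (mulA : A ⊗[k] A →ₗ[k] A) (unitA : k →ₗ[k] A)
    (comulA : A →ₗ[k] A ⊗[k] A) (counitA : A →ₗ[k] k)
    (mulB : B ⊗[k] B →ₗ[k] B) (unitB : k →ₗ[k] B)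
    (comulB : B →ₗ[k] B ⊗[k] B) (counitB : B →ₗ[k] k)
    (hA : IsFrobenius k mulA unitA comulA counitA)
    (hB : IsFrobenius k mulB unitB comulB counitB)
    (ιA : A →ₗ[k] Λ) (ιB : B →ₗ[k] Λ)
    (hιAinj : Function.Injective ιA) (hιBinj : Function.Injective ιB)
    (hιAmul : ιA ∘ₗ mulA = LinearMap.mul' k Λ ∘ₗ TensorProduct.map ιA ιA)
    (hιAunit : ιA ∘ₗ unitA = Algebra.linearMap k Λ)
    (hιBmul : ιB ∘ₗ mulB = LinearMap.mul' k Λ ∘ₗ TensorProduct.map ιB ιB)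
    (hιBunit : ιB ∘ₗ unitB = Algebra.linearMap k Λ)
    (hbij : Function.Bijective (LinearMap.mul' k Λ ∘ₗ TensorProduct.map ιA ιB))
    (hcompat : ComulCompat k comulA comulB
      ((LinearEquiv.ofBijective (LinearMap.mul' k Λ ∘ₗ TensorProduct.map ιA ιB)
          hbij).symm.toLinearMap
        ∘ₗ LinearMap.mul' k Λ ∘ₗ TensorProduct.map ιB ιA)) :
    Module.Injective Λ Λ := by
  have hιA : IsAlgHom mulA unitA ιA :=
    ⟨fun a a' => LinearMap.congr_fun hιAmul (a ⊗ₜ a'), by simpa using LinearMap.congr_fun hιAunit 1⟩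
  have hιB : IsAlgHom mulB unitB ιB :=
    ⟨fun b b' => LinearMap.congr_fun hιBmul (b ⊗ₜ b'), by simpa using LinearMap.congr_fun hιBunit 1⟩
  set τ : B ⊗[k] A →ₗ[k] A ⊗[k] B := (LinearEquiv.ofBijective
    (LinearMap.mul' k Λ ∘ₗ TensorProduct.map ιA ιB) hbij).symm.toLinearMap
      ∘ₗ LinearMap.mul' k Λ ∘ₗ TensorProduct.map ιB ιA
  have hτ : mulMap ιA ιB ∘ₗ τ = mulMap ιB ιA :=
    LinearMap.ext fun z => LinearEquiv.apply_symm_apply (LinearEquiv.ofBijective _ hbij) _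
  have τ_tmul_one : ∀ b, τ (b ⊗ₜ unitA 1) = unitA 1 ⊗ₜ b := twist_tmul_one hιA hbij.1 hτ
  have hτbij : Function.Bijective τ := hcompat.bijective hA hB (τ_tmul_one _)
  have hinj : Function.Injective (mulMap ιB ιA) := by
    rw [← hτ]
    exact hbij.1.comp hτbij.1
  obtain ⟨μ, hμ⟩ := exists_rightSlice_mulComul_eq_one hB.2.1 hA.2.1 hιB hιA hinj τ_tmul_one
  have hcasimir : IsCasimir (mulComul ιB ιA comulB comulA τ (unitB 1 ⊗ₜ unitA 1)) :=
    ComulCompat.isCasimir_mulComul (τ := LinearEquiv.ofBijective τ hτbij) hcompat hA hB hιA hιB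
      hbij hτ
  exact hcasimir.injective hμ
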